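/- Maximum distortion of the Prelec weighting function (supporting claim for Proposition 1, part (3)). Let γ ∈ (0, 1) and p(z) = exp(−(−log z)^γ) for z ∈ (0, 1). Then for every z ∈ (0, 1), z/p(z) ≤ exp(γ^{γ/(1−γ)} − γ^{1/(1−γ)}), and equality holds if and only if z = exp(−γ^{1/(1−γ)}). In particular, the function z ↦ z/p(z) on (0, 1) attains its maximum value exp(γ^{γ/(1−γ)} − γ^{1/(1−γ)}) at the unique point z* = exp(−γ^{1/(1−γ)}). -/

import Mathlib

/-!
Put `t = -log z`, so that `log (z / p z) = t ^ γ - t`. By strict concavity, the graph of `t ↦ t ^ γ`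
lies strictly below its tangent line at any `a > 0`, except at `a` itself. For
`a = γ ^ (1 / (1 - γ))` the tangent line has slope `1`, which gives `t ^ γ - t < a ^ γ - a` for
`t ≠ a`.
-/

theorem rpow_one_div_rpow {x : ℝ} (hx : 0 ≤ x) (c y : ℝ) : (x ^ (1 / c)) ^ y = x ^ (y / c) := by
  rw [← Real.rpow_mul hx, one_div_mul_eq_div]

section RpowSubSelf

variable {γ t : ℝ}

theorem rpow_lt_tangentLine {a : ℝ} (hγ₀ : 0 < γ) (hγ₁ : γ < 1) (ha : 0 < a) (ht : 0 ≤ t)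
    (hta : t ≠ a) : t ^ γ < a ^ γ + γ * a ^ (γ - 1) * (t - a) := by
  have hratio : t / a - 1 ≠ 0 := by rwa [sub_ne_zero, Ne, div_eq_one_iff_eq ha.ne']
  have hbernoulli : (t / a) ^ γ < 1 + γ * (t / a - 1) := by
    simpa using rpow_one_add_lt_one_add_mul_self
      (by linarith [div_nonneg ht ha.le] : -1 ≤ t / a - 1) hratio hγ₀ hγ₁
  calc
    t ^ γ = (t / a) ^ γ * a ^ γ := by
      rw [← Real.mul_rpow (div_nonneg ht ha.le) ha.le, div_mul_cancel₀ _ ha.ne']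
    _ < (1 + γ * (t / a - 1)) * a ^ γ := by gcongr
    _ = a ^ γ + γ * a ^ (γ - 1) * (t - a) := by
      rw [Real.rpow_sub_one ha.ne']
      field_simp

theorem mul_rpow_one_div_one_sub_rpow_sub_one (hγ₀ : 0 < γ) (hγ_ne_one : γ ≠ 1) :
    γ * (γ ^ (1 / (1 - γ))) ^ (γ - 1) = 1 := by
  have hexp : 1 / (1 - γ) * (γ - 1) = -1 := by
    rw [← neg_sub 1 γ, mul_neg, one_div_mul_cancel (sub_ne_zero.mpr hγ_ne_one.symm)]
  rw [← Real.rpow_mul hγ₀.le, hexp, Real.rpow_neg_one, mul_inv_cancel₀ hγ₀.ne']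

theorem rpow_sub_self_lt_of_ne (hγ₀ : 0 < γ) (hγ₁ : γ < 1) (ht : 0 ≤ t)
    (hne : t ≠ γ ^ (1 / (1 - γ))) :
    t ^ γ - t < γ ^ (γ / (1 - γ)) - γ ^ (1 / (1 - γ)) := by
  have htangent := rpow_lt_tangentLine hγ₀ hγ₁ (Real.rpow_pos_of_pos hγ₀ _) ht hne
  rw [mul_rpow_one_div_one_sub_rpow_sub_one hγ₀ hγ₁.ne,
    rpow_one_div_rpow hγ₀.le] at htangent
  linarith

theorem rpow_sub_self_eq_iff (hγ₀ : 0 < γ) (hγ₁ : γ < 1) (ht : 0 ≤ t) :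
    t ^ γ - t = γ ^ (γ / (1 - γ)) - γ ^ (1 / (1 - γ)) ↔ t = γ ^ (1 / (1 - γ)) := by
  refine ⟨fun heq ↦ ?_, fun h ↦ by rw [h, rpow_one_div_rpow hγ₀.le]⟩
  by_contra hne
  exact (rpow_sub_self_lt_of_ne hγ₀ hγ₁ ht hne).ne heq

theorem rpow_sub_self_le (hγ₀ : 0 < γ) (hγ₁ : γ < 1) (ht : 0 ≤ t) :
    t ^ γ - t ≤ γ ^ (γ / (1 - γ)) - γ ^ (1 / (1 - γ)) := by
  by_cases h : t = γ ^ (1 / (1 - γ))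
  · exact ((rpow_sub_self_eq_iff hγ₀ hγ₁ ht).mpr h).le
  · exact (rpow_sub_self_lt_of_ne hγ₀ hγ₁ ht h).le

end RpowSubSelf

theorem div_exp_neg_eq_exp_sub_neg_log {z : ℝ} (hz : 0 < z) (y : ℝ) :
    z / Real.exp (-y) = Real.exp (y - -Real.log z) := by
  rw [sub_neg_eq_add, add_comm, ← sub_neg_eq_add, Real.exp_sub, Real.exp_log hz]

theorem eq_exp_neg_iff_neg_log_eq {z : ℝ} (hz : 0 < z) (a : ℝ) :
    z = Real.exp (-a) ↔ -Real.log z = a := by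
  rw [neg_eq_iff_eq_neg, ← Real.exp_eq_exp (x := Real.log z), Real.exp_log hz]

/-- Maximum distortion of the Prelec weighting function
(supporting claim for Proposition 1, part (3)). -/
theorem prelec_max_distortion
    (γ : ℝ) (hγ : γ ∈ Set.Ioo (0 : ℝ) 1)
    (p : ℝ → ℝ) (hp : ∀ z, p z = Real.exp (-((-Real.log z) ^ γ))) :
    ∀ z ∈ Set.Ioo (0 : ℝ) 1,
      z / p z ≤ Real.exp (γ ^ (γ / (1 - γ)) - γ ^ (1 / (1 - γ))) ∧
      (z / p z = Real.exp (γ ^ (γ / (1 - γ)) - γ ^ (1 / (1 - γ))) ↔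
        z = Real.exp (-(γ ^ (1 / (1 - γ))))) := by
  obtain ⟨hγ₀, hγ₁⟩ := hγ
  rintro z ⟨hz₀, hz₁⟩
  have ht : 0 ≤ -Real.log z := neg_nonneg.mpr (Real.log_nonpos hz₀.le hz₁.le)
  rw [hp, div_exp_neg_eq_exp_sub_neg_log hz₀, eq_exp_neg_iff_neg_log_eq hz₀, Real.exp_le_exp,
    Real.exp_eq_exp]
  exact ⟨rpow_sub_self_le hγ₀ hγ₁ ht, rpow_sub_self_eq_iff hγ₀ hγ₁ ht⟩
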